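/- Let p be a prime and r ≥ 4 an integer, and let M_{r,p} be the matroid of the labeled family of vectors e_1, v = e_2 + ⋯ + e_r, and v_{k,ℓ} = k·e_1 + e_ℓ (2 ≤ ℓ ≤ r, 0 ≤ k < p) in F_p^r, with i the label of e_1 and j the label of v. Then the pair i, j is positively correlated, i.e. b · b_{ij} > b_i · b_j, and α(M_{r,p}; i, j) = (r−1)² / (2 + (r−1)·(r−2)). -/

import Mathlib

/-- The index (label) type of the configuration `M_{r,p}`: one label for `e₁`, one label
for `v = e₂ + ⋯ + e_r`, and one label for each vector `v_{k,ℓ} = k·e₁ + e_ℓ` with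
`ℓ ∈ {2, …, r}` (encoded as a nonzero index of `Fin r`) and `k ∈ F_p`. In total there
are `2 + p·(r−1)` labels. -/
abbrev MrpIndex (r p : ℕ) : Type :=
  Unit ⊕ Unit ⊕ ({l : Fin r // l.val ≠ 0} × ZMod p)

/-- The vectors of the configuration `M_{r,p}` in `F_p^r`: the label `Sum.inl ()`
carries `e₁`, the label `Sum.inr (Sum.inl ())` carries `v = e₂ + ⋯ + e_r`, and the
label `Sum.inr (Sum.inr (ℓ, k))` carries `v_{k,ℓ} = k·e₁ + e_ℓ`. -/
def mrpVec (r p : ℕ) : MrpIndex r p → (Fin r → ZMod p)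
  | Sum.inl _ => fun m => if m.val = 0 then 1 else 0
  | Sum.inr (Sum.inl _) => fun m => if m.val = 0 then 0 else 1
  | Sum.inr (Sum.inr lk) => fun m =>
      if m.val = 0 then lk.2 else if m = lk.1.1 then 1 else 0

/-- The label of the vector `e₁` in `M_{r,p}`. -/
def mrpI (r p : ℕ) : MrpIndex r p := Sum.inl ()

/-- The label of the vector `v = e₂ + ⋯ + e_r` in `M_{r,p}`. -/
def mrpJ (r p : ℕ) : MrpIndex r p := Sum.inr (Sum.inl ())

/-- A finite set `s` of labels of a labeled family `w` of vectors forms a vector-space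
basis if the family of vectors indexed by `s` is linearly independent and spans. -/
def FormsBasis (K : Type*) {ι : Type*} [Field K] {V : Type*} [AddCommGroup V] [Module K V]
    (w : ι → V) (s : Finset ι) : Prop :=
  LinearIndependent K (fun x : s => w x.val) ∧ Submodule.span K (w '' ↑s) = ⊤

open Finset Function

section Degrees

variable {L : Type*} [Fintype L]

lemma eq_one_of_sum_eq_card {d : L → ℕ} (hd : ∀ l, 1 ≤ d l)
    (hs : ∑ l, d l = Fintype.card L) : d = 1 := by
  have h := (sum_eq_sum_iff_of_le (s := univ) (f := fun _ => 1) (g := d) fun l _ => hd l).1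
    (by simp [hs])
  funext l
  exact (h l (mem_univ l)).symm

variable [DecidableEq L]

lemma sum_update_add (d : L → ℕ) (m : L) (c : ℕ) :
    ∑ l, update d m c l + d m = ∑ l, d l + c := by
  rw [sum_update_of_mem (mem_univ m), ← add_sum_erase univ d (mem_univ m),
    sdiff_singleton_eq_erase]
  ring

lemma prod_choose_update_mul (q : ℕ) (d : L → ℕ) (m : L) (c : ℕ) :
    (∏ l, q.choose (update d m c l)) * q.choose (d m) =
      (∏ l, q.choose (d l)) * q.choose c := by
  simp_rw [Function.apply_update (fun _ => q.choose) d m c]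
  rw [prod_update_of_mem (mem_univ m), ← mul_prod_erase univ (fun l => q.choose (d l)) (mem_univ m),
    sdiff_singleton_eq_erase]
  ring

lemma exists_eq_update_two {d : L → ℕ} (hd : ∀ l, 1 ≤ d l)
    (hs : ∑ l, d l = Fintype.card L + 1) : ∃ m, d = update (1 : L → ℕ) m 2 := by
  obtain ⟨m, hm⟩ : ∃ m, 2 ≤ d m := by
    by_contra! h
    have : ∑ l, d l = ∑ l : L, 1 := sum_congr rfl fun l _ => by have := h l; have := hd l; omega
    simp at this
    omega
  refine ⟨m, ?_⟩
  have h1 : update d m (d m - 1) = 1 := by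
    apply eq_one_of_sum_eq_card
    · intro l
      by_cases hl : l = m
      · subst hl; simp; omega
      · simp [hl, hd l]
    · have := sum_update_add d m (d m - 1)
      omega
  funext l
  have h2 := congrFun h1 l
  by_cases hl : l = m
  · subst hl; simp at h2 ⊢; omega
  · simpa [hl] using h2

lemma eq_update_zero {d : L → ℕ} {m : L} (hm : d m = 0) (hd : ∀ l, l ≠ m → 1 ≤ d l)
    (hs : ∑ l, d l + 1 = Fintype.card L) : d = update (1 : L → ℕ) m 0 := by
  have h1 : update d m 1 = 1 := by
    apply eq_one_of_sum_eq_card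
    · intro l
      by_cases hl : l = m
      · subst hl; simp
      · simp [hl, hd l hl]
    · have := sum_update_add d m 1
      omega
  rw [← h1, update_idem, ← hm, update_eq_self]

lemma exists_eq_update_two_zero {d : L → ℕ} {m : L} (hm : d m = 0)
    (hd : ∀ l, l ≠ m → 1 ≤ d l) (hs : ∑ l, d l = Fintype.card L) :
    ∃ a, a ≠ m ∧ d = update (update (1 : L → ℕ) a 2) m 0 := by
  obtain ⟨a, ha⟩ : ∃ a, update d m 1 = update (1 : L → ℕ) a 2 := by
    apply exists_eq_update_two
    · intro l
      by_cases hl : l = m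
      · subst hl; simp
      · simp [hl, hd l hl]
    · have := sum_update_add d m 1
      omega
  refine ⟨a, ?_, ?_⟩
  · rintro rfl
    simpa using congrFun ha a
  · rw [← ha, update_idem, ← hm, update_eq_self]

end Degrees

section Fibres

variable {L K : Type*} [Fintype L] [DecidableEq L] [Fintype K]

/-- The families of subsets of `K` whose sizes are prescribed by `d`. -/
def familiesOfCard (K : Type*) [Fintype K] (d : L → ℕ) : Finset (L → Finset K) :=
  Fintype.piFinset fun l => powersetCard (d l) univ

lemma mem_familiesOfCard {d : L → ℕ} {g : L → Finset K} :
    g ∈ familiesOfCard K d ↔ (fun l => #(g l)) = d := by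
  simp [familiesOfCard, funext_iff, mem_powersetCard]

lemma card_familiesOfCard (d : L → ℕ) :
    #(familiesOfCard K d) = ∏ l, (Fintype.card K).choose (d l) := by
  simp [familiesOfCard]

lemma card_biUnion_familiesOfCard [DecidableEq K] {ι : Type*} (T : Finset ι) (D : ι → L → ℕ)
    (hD : Set.InjOn D T) :
    #(T.biUnion fun t => familiesOfCard K (D t)) =
      ∑ t ∈ T, ∏ l, (Fintype.card K).choose (D t l) := by
  rw [card_biUnion]
  · simp only [card_familiesOfCard]
  · intro s hs t ht hst
    rw [Function.onFun, Finset.disjoint_left]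
    intro g hg hg'
    exact hst (hD hs ht ((mem_familiesOfCard.1 hg).symm.trans (mem_familiesOfCard.1 hg')))

end Fibres

section Separating

variable {L K : Type*} [Fintype L] [Field K]

/-- The only linear functional `(x, y)` vanishing on the vectors `k·e₁ + e_l` for `k ∈ g l`, on
`e₁` if `P` holds, and on the sum of all `e_l` if `Q` holds, is zero. -/
def Separating (P Q : Prop) (g : L → Finset K) : Prop :=
  ∀ (x : K) (y : L → K), (P → x = 0) → (Q → ∑ l, y l = 0) →
    (∀ l, ∀ k ∈ g l, k * x + y l = 0) → x = 0 ∧ y = 0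

lemma separating_singleton_iff (f : L → K) :
    Separating False True (fun l => {f l}) ↔ ∑ l, f l ≠ 0 := by
  constructor
  · intro h h0
    have := (h 1 (-f) False.elim (by simp [h0]) (by simp)).1
    exact one_ne_zero this
  · intro h0 x y _ hy hg
    have hy' : ∀ l, y l = -(f l * x) := fun l => by
      linear_combination hg l (f l) (by simp)
    have hx : (∑ l, f l) * x = 0 := by
      have := hy trivial
      simp_rw [hy'] at this
      rwa [sum_neg_distrib, neg_eq_zero, ← sum_mul] at this
    obtain rfl := (mul_eq_zero.1 hx).resolve_left h0
    exact ⟨rfl, funext fun l => by simp [hy']⟩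

variable [DecidableEq L]

lemma eq_zero_of_sum_eq_zero {y : L → K} {m : L} (h : ∀ l, l ≠ m → y l = 0)
    (hs : ∑ l, y l = 0) : y = 0 := by
  rw [Fintype.sum_eq_single m h] at hs
  funext l
  by_cases hl : l = m
  · rw [hl, hs]; rfl
  · exact h l hl

lemma Separating.card_pos {P : Prop} {g : L → Finset K} (h : Separating P False g) (l : L) :
    1 ≤ #(g l) := by
  by_contra! hl
  have hl : g l = ∅ := by simpa using hl
  have := (h 0 (Pi.single l 1) (fun _ => rfl) False.elim (by
    intro m k hk
    have : m ≠ l := by rintro rfl; simp [hl] at hk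
    simp [this])).2
  simpa using congrFun this l

lemma Separating.card_pos_of_ne {P Q : Prop} {g : L → Finset K} (h : Separating P Q g) {m : L}
    (hm : #(g m) = 0) (l : L) (hlm : l ≠ m) : 1 ≤ #(g l) := by
  by_contra! hl
  have hl : g l = ∅ := by simpa using hl
  have hm : g m = ∅ := by simpa using hm
  have := (h 0 (Pi.single l 1 - Pi.single m 1) (fun _ => rfl) (by simp) (by
    intro a k hk
    have h1 : a ≠ l := by rintro rfl; simp [hl] at hk
    have h2 : a ≠ m := by rintro rfl; simp [hm] at hk
    simp [h1, h2])).2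
  simpa [hlm] using congrFun this l

lemma eq_zero_of_one_lt_card {s : Finset K} (hs : 1 < #s) {x y : K}
    (h : ∀ k ∈ s, k * x + y = 0) : x = 0 := by
  obtain ⟨a, ha, b, hb, hab⟩ := one_lt_card.1 hs
  have : (a - b) * x = 0 := by linear_combination h a ha - h b hb
  exact (mul_eq_zero.1 this).resolve_left (sub_ne_zero.2 hab)

lemma eq_zero_of_card_pos {s : Finset K} (hs : 0 < #s) {y : K}
    (h : ∀ k ∈ s, k * 0 + y = 0) : y = 0 := by
  obtain ⟨a, ha⟩ := card_pos.1 hs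
  simpa using h a ha

lemma separating_true_true_iff (g : L → Finset K) :
    Separating True True g ∧ ∑ l, #(g l) + 1 = Fintype.card L ↔
      ∃ m, (fun l => #(g l)) = update (1 : L → ℕ) m 0 := by
  constructor
  · rintro ⟨h, hs⟩
    obtain ⟨m, hm⟩ : ∃ m, #(g m) = 0 := by
      by_contra! h0
      have := sum_le_sum (s := univ) (f := fun _ : L => 1) (g := fun l => #(g l))
        fun l _ => Nat.one_le_iff_ne_zero.2 (h0 l)
      simp at this
      omega
    exact ⟨m, eq_update_zero hm (h.card_pos_of_ne hm) hs⟩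
  · rintro ⟨m, hm⟩
    refine ⟨fun x y hx hy hg => ?_, ?_⟩
    · obtain rfl := hx trivial
      refine ⟨rfl, eq_zero_of_sum_eq_zero (m := m) (fun l hl => ?_) (hy trivial)⟩
      refine eq_zero_of_card_pos ?_ (hg l)
      have := congrFun hm l
      simp [hl] at this
      omega
    · have h1 := sum_update_add (1 : L → ℕ) m 0
      rw [← hm] at h1
      simpa using h1

lemma separating_true_false_iff (g : L → Finset K) :
    Separating True False g ∧ ∑ l, #(g l) = Fintype.card L ↔ (fun l => #(g l)) = 1 := by
  constructor
  · rintro ⟨h, hs⟩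
    exact eq_one_of_sum_eq_card h.card_pos hs
  · intro h1
    refine ⟨fun x y hx _ hg => ?_, ?_⟩
    · obtain rfl := hx trivial
      refine ⟨rfl, funext fun l => eq_zero_of_card_pos ?_ (hg l)⟩
      have := congrFun h1 l
      simp at this
      omega
    · change ∑ l, (fun l => #(g l)) l = _
      simp [h1]

lemma separating_false_false_iff (g : L → Finset K) :
    Separating False False g ∧ ∑ l, #(g l) = Fintype.card L + 1 ↔
      ∃ m, (fun l => #(g l)) = update (1 : L → ℕ) m 2 := by
  constructor
  · rintro ⟨h, hs⟩
    exact exists_eq_update_two h.card_pos hs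
  · rintro ⟨m, hm⟩
    refine ⟨fun x y _ _ hg => ?_, ?_⟩
    · obtain rfl : x = 0 := eq_zero_of_one_lt_card (s := g m) (by
        have := congrFun hm m
        simp at this
        omega) (hg m)
      refine ⟨rfl, funext fun l => eq_zero_of_card_pos ?_ (hg l)⟩
      have := congrFun hm l
      by_cases hl : l = m
      · subst hl; simp at this; omega
      · simp [hl] at this; omega
    · have h1 := sum_update_add (1 : L → ℕ) m 2
      rw [← hm] at h1
      simpa using h1

lemma separating_false_true_iff (g : L → Finset K) :
    Separating False True g ∧ ∑ l, #(g l) = Fintype.card L ↔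
      (∃ f : L → K, ∑ l, f l ≠ 0 ∧ (fun l => {f l}) = g) ∨
        ∃ t : L × L, t.1 ≠ t.2 ∧ (fun l => #(g l)) = update (update (1 : L → ℕ) t.1 2) t.2 0 := by
  constructor
  · rintro ⟨h, hs⟩
    by_cases h0 : ∃ m, #(g m) = 0
    · obtain ⟨m, hm⟩ := h0
      obtain ⟨a, ha, hd⟩ := exists_eq_update_two_zero (d := fun l => #(g l)) hm (h.card_pos_of_ne hm) hs
      exact Or.inr ⟨(a, m), ha, hd⟩
    · push Not at h0
      have h1 := eq_one_of_sum_eq_card (d := fun l => #(g l))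
        (fun l => Nat.one_le_iff_ne_zero.2 (h0 l)) hs
      choose f hf using fun l => card_eq_one.1 (congrFun h1 l)
      obtain rfl : (fun l => {f l}) = g := funext fun l => (hf l).symm
      exact Or.inl ⟨f, (separating_singleton_iff f).1 h, rfl⟩
  · rintro (⟨f, hf, rfl⟩ | ⟨⟨a, m⟩, ham, hd⟩)
    · exact ⟨(separating_singleton_iff f).2 hf, by simp⟩
    · simp only at ham hd
      refine ⟨fun x y _ hy hg => ?_, ?_⟩
      · obtain rfl : x = 0 := eq_zero_of_one_lt_card (s := g a) (by
          have := congrFun hd a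
          simp [ham] at this
          omega) (hg a)
        refine ⟨rfl, eq_zero_of_sum_eq_zero (m := m) (fun l hl => ?_) (hy trivial)⟩
        refine eq_zero_of_card_pos ?_ (hg l)
        have := congrFun hd l
        by_cases hla : l = a
        · subst hla; simp [hl] at this; omega
        · simp [hl, hla] at this; omega
      · have h1 := sum_update_add (1 : L → ℕ) a 2
        have h2 := sum_update_add (update (1 : L → ℕ) a 2) m 0
        rw [← hd] at h2
        simp [ham.symm] at h1 h2
        omega

end Separating

section Counting

variable {L K : Type*} [Fintype L] [DecidableEq L] [Field K] [Fintype K]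

lemma card_separating_true_true :
    Nat.card {g : L → Finset K // Separating True True g ∧ ∑ l, #(g l) + 1 = Fintype.card L} *
      Fintype.card K = Fintype.card L * Fintype.card K ^ Fintype.card L := by
  classical
  rw [Nat.subtype_card (univ.biUnion fun m : L => familiesOfCard K (update (1 : L → ℕ) m 0))
    (by simp [separating_true_true_iff, mem_familiesOfCard]), card_biUnion_familiesOfCard, sum_mul]
  · have h := fun m : L => prod_choose_update_mul (Fintype.card K) 1 m 0
    simp only [Pi.one_apply, Nat.choose_one_right] at h
    simp [h]
  · intro a _ b _ hab
    by_contra hne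
    simpa [hne] using congrFun hab a

lemma card_separating_true_false :
    Nat.card {g : L → Finset K // Separating True False g ∧ ∑ l, #(g l) = Fintype.card L} =
      Fintype.card K ^ Fintype.card L := by
  rw [Nat.subtype_card (familiesOfCard K 1)
    (by simp [separating_true_false_iff, mem_familiesOfCard]), card_familiesOfCard]
  simp

lemma card_separating_false_false :
    Nat.card {g : L → Finset K //
        Separating False False g ∧ ∑ l, #(g l) = Fintype.card L + 1} * Fintype.card K =
      Fintype.card L * Fintype.card K ^ Fintype.card L * (Fintype.card K).choose 2 := by
  classical
  rw [Nat.subtype_card (univ.biUnion fun m : L => familiesOfCard K (update (1 : L → ℕ) m 2))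
    (by simp [separating_false_false_iff, mem_familiesOfCard]), card_biUnion_familiesOfCard,
    sum_mul]
  · have h := fun m : L => prod_choose_update_mul (Fintype.card K) 1 m 2
    simp only [Pi.one_apply, Nat.choose_one_right] at h
    simp [h, mul_assoc]
  · intro a _ b _ hab
    by_contra hne
    simpa [hne] using congrFun hab a

lemma card_sum_eq_zero_mul [Nonempty L] [DecidableEq K] :
    #{f : L → K | ∑ l, f l = 0} * Fintype.card K = Fintype.card K ^ Fintype.card L := by
  obtain ⟨m⟩ := ‹Nonempty L›
  have h : ∀ c : K, #{f : L → K | ∑ l, f l = c} = #{f : L → K | ∑ l, f l = 0} := by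
    intro c
    refine card_equiv (Equiv.subRight (Pi.single m c)) fun f => ?_
    simp [sub_eq_zero]
  have h2 := card_eq_sum_card_fiberwise (s := (univ : Finset (L → K))) (t := univ)
    (f := fun f => ∑ l, f l) (fun _ _ => by simp)
  simp only [h, card_univ, Fintype.card_fun, sum_const, smul_eq_mul] at h2
  rw [h2, mul_comm]

lemma card_separating_false_true [Nonempty L] :
    Nat.card {g : L → Finset K //
        Separating False True g ∧ ∑ l, #(g l) = Fintype.card L} * Fintype.card K ^ 2 +
      Fintype.card K ^ Fintype.card L * Fintype.card K =
      Fintype.card K ^ Fintype.card L * Fintype.card K ^ 2 +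
      (Fintype.card L * Fintype.card L - Fintype.card L) *
        (Fintype.card K ^ Fintype.card L * (Fintype.card K).choose 2) := by
  classical
  rw [Nat.subtype_card
    (({f : L → K | ∑ l, f l ≠ 0} : Finset (L → K)).image (fun f l => ({f l} : Finset K)) ∪
      (univ.offDiag.biUnion fun t : L × L =>
        familiesOfCard K (update (update (1 : L → ℕ) t.1 2) t.2 0)))
    (by simp [separating_false_true_iff, mem_familiesOfCard]),
    card_union_of_disjoint, card_biUnion_familiesOfCard, card_image_of_injective]
  · have h0 := card_sum_eq_zero_mul (L := L) (K := K)
    have h1 := card_filter_add_card_filter_not (s := (univ : Finset (L → K)))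
      (fun f => ∑ l, f l = 0)
    have h2 : (∑ t ∈ (univ : Finset L).offDiag,
        ∏ l, (Fintype.card K).choose (update (update (1 : L → ℕ) t.1 2) t.2 0 l)) * Fintype.card K ^ 2 =
        (Fintype.card L * Fintype.card L - Fintype.card L) *
        (Fintype.card K ^ Fintype.card L * (Fintype.card K).choose 2) := by
      rw [sum_mul, sum_congr rfl (g := fun _ =>
        Fintype.card K ^ Fintype.card L * (Fintype.card K).choose 2), sum_const, offDiag_card]
      · simp
      · rintro ⟨a, b⟩ hab
        have hab : a ≠ b := by simpa using hab
        have e1 := prod_choose_update_mul (Fintype.card K) (1 : L → ℕ) a 2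
        have e2 := prod_choose_update_mul (Fintype.card K) (update (1 : L → ℕ) a 2) b 0
        simp [hab.symm] at e1 e2
        simp only
        rw [pow_two, ← mul_assoc, e2, e1]
    simp only [card_univ, Fintype.card_fun] at h1
    rw [add_mul, h2]
    nlinarith
  · intro f f' h
    funext l
    simpa using congrFun h l
  · rintro ⟨a, b⟩ hab ⟨a', b'⟩ hab' h
    simp only [coe_offDiag, Set.mem_offDiag] at hab hab'
    have hb : b = b' := by
      by_contra hne
      have := congrFun h b
      by_cases hba : b = a'
      · subst hba; simp [hne] at this
      · simp [hne, hba] at this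
    subst hb
    have ha : a = a' := by
      by_contra hne
      have := congrFun h a
      simp [hne, hab.2.2] at this
    rw [ha]
  · rw [Finset.disjoint_left]
    intro g hg hg'
    simp only [mem_image, mem_biUnion, mem_familiesOfCard] at hg hg'
    obtain ⟨f, -, rfl⟩ := hg
    obtain ⟨t, -, ht⟩ := hg'
    simpa using congrFun ht t.2

end Counting

lemma span_eq_top_iff_dotProduct {K ι : Type*} [Field K] [Fintype ι] (S : Set (ι → K)) :
    Submodule.span K S = ⊤ ↔ ∀ φ : ι → K, (∀ v ∈ S, φ ⬝ᵥ v = 0) → φ = 0 := by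
  classical
  constructor
  · intro h φ hφ
    have hle : Submodule.span K S ≤ LinearMap.ker (dotProductEquiv K ι φ) :=
      Submodule.span_le.2 fun v hv => by simpa using hφ v hv
    rw [h, top_le_iff, LinearMap.ker_eq_top] at hle
    simpa using hle
  · intro h
    by_contra hne
    obtain ⟨f, hf, hle⟩ := Submodule.exists_le_ker_of_lt_top _ (lt_top_iff_ne_top.2 hne)
    refine hf ?_
    obtain ⟨φ, rfl⟩ := (dotProductEquiv K ι).surjective f
    rw [h φ fun v hv => by simpa using hle (Submodule.subset_span hv), map_zero]

lemma formsBasis_iff_span {K ι V : Type*} [Field K] [AddCommGroup V] [Module K V]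
    {w : ι → V} {s : Finset ι} (hs : #s = Module.finrank K V) :
    FormsBasis K w s ↔ Submodule.span K (w '' s) = ⊤ := by
  refine ⟨fun h => h.2, fun h => ⟨?_, h⟩⟩
  apply linearIndependent_of_top_le_span_of_card_eq_finrank
  · rw [← h]
    apply Submodule.span_mono
    rintro _ ⟨a, ha, rfl⟩
    exact ⟨⟨a, ha⟩, rfl⟩
  · simpa using hs

section Configuration

variable {r p : ℕ}

/-- The coefficients `k` for which the label of `k·e₁ + e_l` belongs to `s`. -/
noncomputable def mrpFibre [NeZero p] (s : Finset (MrpIndex r p)) (l : {l : Fin r // l.val ≠ 0}) :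
    Finset (ZMod p) := by
  classical exact {k | Sum.inr (Sum.inr (l, k)) ∈ s}

lemma mem_mrpFibre [NeZero p] {s : Finset (MrpIndex r p)} {l : {l : Fin r // l.val ≠ 0}}
    {k : ZMod p} : k ∈ mrpFibre s l ↔ Sum.inr (Sum.inr (l, k)) ∈ s := by
  simp [mrpFibre]

open Classical in
lemma card_eq_add_sum_card_mrpFibre [NeZero p] (s : Finset (MrpIndex r p)) :
    #s = (if mrpI r p ∈ s then 1 else 0) + ((if mrpJ r p ∈ s then 1 else 0) +
      ∑ l, #(mrpFibre s l)) := by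
  have h : #s = ∑ a, if a ∈ s then 1 else 0 := by simp
  rw [h, Fintype.sum_sum_type, Fintype.sum_sum_type, Fintype.sum_prod_type]
  simp [mrpFibre, mrpI, mrpJ, filter_singleton, apply_ite card]
  rfl

lemma dotProduct_mrpI [NeZero r] (φ : Fin r → ZMod p) : φ ⬝ᵥ mrpVec r p (mrpI r p) = φ 0 := by
  simp [dotProduct, mrpVec, mrpI]

lemma dotProduct_mrpJ (φ : Fin r → ZMod p) :
    φ ⬝ᵥ mrpVec r p (mrpJ r p) = ∑ l : {l : Fin r // l.val ≠ 0}, φ l := by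
  rw [← Finset.sum_subtype (univ.filter fun l : Fin r => l.val ≠ 0) (by simp) φ, sum_filter]
  simp [dotProduct, mrpVec, mrpJ]

lemma dotProduct_mrpVec [NeZero r] (φ : Fin r → ZMod p) (l : {l : Fin r // l.val ≠ 0})
    (k : ZMod p) :
    φ ⬝ᵥ mrpVec r p (Sum.inr (Sum.inr (l, k))) = k * φ 0 + φ l := by
  have h : ∀ m : Fin r, φ m * mrpVec r p (Sum.inr (Sum.inr (l, k))) m =
      (if m = 0 then k * φ m else 0) + if m = l.1 then φ m else 0 := by
    intro m
    by_cases hm : m = 0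
    · subst hm
      have : (0 : Fin r) ≠ l.1 := fun h => l.2 (by simp [← h])
      simp [mrpVec, this, mul_comm]
    · simp [mrpVec, hm]
  simp [dotProduct, h, sum_add_distrib]

lemma formsBasis_mrpVec_iff [NeZero r] [Fact p.Prime] {s : Finset (MrpIndex r p)} (hs : #s = r) :
    FormsBasis (ZMod p) (mrpVec r p) s ↔
      Separating (mrpI r p ∈ s) (mrpJ r p ∈ s) (mrpFibre s) := by
  rw [formsBasis_iff_span (by simpa using hs), span_eq_top_iff_dotProduct]
  simp only [Set.forall_mem_image]
  constructor
  · intro h x y hx hy hg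
    have := h (fun m => if hm : m.val = 0 then x else y ⟨m, hm⟩) (by
      rintro (a | a | ⟨l, k⟩) ha
      · exact (dotProduct_mrpI _).trans (by simpa using hx ha)
      · refine (dotProduct_mrpJ _).trans (Eq.trans (sum_congr rfl fun l _ => ?_) (hy ha))
        simp [l.2]
      · refine (dotProduct_mrpVec _ l k).trans ?_
        simpa [l.2] using hg l k (mem_mrpFibre.2 ha))
    refine ⟨by simpa using congrFun this 0, funext fun l => ?_⟩
    simpa [l.2] using congrFun this l
  · intro h φ hφ
    obtain ⟨h0, h1⟩ := h (φ 0) (fun l => φ l) (fun hi => by simpa [dotProduct_mrpI] using hφ hi)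
      (fun hj => by simpa [dotProduct_mrpJ] using hφ hj)
      (fun l k hk => by simpa [dotProduct_mrpVec] using hφ (mem_mrpFibre.1 hk))
    funext m
    by_cases hm : m.val = 0
    · obtain rfl : m = 0 := Fin.ext hm
      exact h0
    · exact congrFun h1 ⟨m, hm⟩

open Classical in
lemma card_bases_eq_card_separating [NeZero r] [Fact p.Prime] (P Q : Prop) :
    Nat.card {s : Finset (MrpIndex r p) // #s = r ∧ FormsBasis (ZMod p) (mrpVec r p) s ∧
        (mrpI r p ∈ s ↔ P) ∧ (mrpJ r p ∈ s ↔ Q)} =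
      Nat.card {g : {l : Fin r // l.val ≠ 0} → Finset (ZMod p) // Separating P Q g ∧
        (if P then 1 else 0) + ((if Q then 1 else 0) + ∑ l, #(g l)) = r} := by
  refine Nat.card_eq_of_bijective (fun s => ⟨mrpFibre s.1, ?_⟩) ⟨?_, ?_⟩
  · obtain ⟨s, hs, hb, hi, hj⟩ := s
    rw [formsBasis_mrpVec_iff hs] at hb
    have := card_eq_add_sum_card_mrpFibre s
    simp only [hi, hj] at hb this
    exact ⟨hb, by rw [← this, hs]⟩
  · rintro ⟨s, hs, hb, hi, hj⟩ ⟨t, ht, hb', hi', hj'⟩ h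
    simp only [Subtype.mk.injEq] at h ⊢
    ext (a | a | ⟨l, k⟩)
    · exact hi.trans hi'.symm
    · exact hj.trans hj'.symm
    · rw [← mem_mrpFibre, ← mem_mrpFibre, h]
  · rintro ⟨g, hg, hc⟩
    let s : Finset (MrpIndex r p) :=
      univ.filter (Sum.elim (fun _ => P) (Sum.elim (fun _ => Q) fun a => a.2 ∈ g a.1))
    have hi : mrpI r p ∈ s ↔ P := by simp [s, mrpI]
    have hj : mrpJ r p ∈ s ↔ Q := by simp [s, mrpJ]
    have hf : mrpFibre s = g := by
      funext l
      ext k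
      simp [mem_mrpFibre, s]
    have hs : #s = r := by
      rw [card_eq_add_sum_card_mrpFibre, hf]
      simpa only [hi, hj] using hc
    refine ⟨⟨s, hs, ?_, hi, hj⟩, Subtype.ext hf⟩
    rw [formsBasis_mrpVec_iff hs, hf]
    simpa only [hi, hj] using hg

lemma card_ne_zero_index [NeZero r] : Fintype.card {l : Fin r // l.val ≠ 0} + 1 = r := by
  have h := Fintype.card_subtype_compl (fun l : Fin r => l = 0)
  have := NeZero.pos r
  simp only [Fintype.card_fin, Fintype.card_unique] at h
  rw [Fintype.card_congr (Equiv.subtypeEquivRight (q := fun l : Fin r => ¬ l = 0)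
    fun l => by simp), h]
  omega

end Configuration

lemma natCard_subtype_eq_add {α : Type*} [Finite α] (P Q : α → Prop) :
    Nat.card {a // P a} = Nat.card {a // P a ∧ Q a} + Nat.card {a // P a ∧ ¬ Q a} := by
  classical
  have := Fintype.ofFinite α
  simp only [Nat.card_eq_fintype_card, Fintype.card_subtype]
  rw [← card_filter_add_card_filter_not (s := {a | P a}) Q, filter_filter, filter_filter]

lemma correlation_of_counts {a b c d n q : ℕ} (hn : 3 ≤ n) (hq : 2 ≤ q)
    (ha : a * q = n * q ^ n) (hb : b = q ^ n)
    (hc : c * q ^ 2 + q ^ n * q = q ^ n * q ^ 2 + (n * n - n) * (q ^ n * q.choose 2))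
    (hd : d * q = n * q ^ n * q.choose 2) :
    (a + b) * (a + c) < (a + b + (c + d)) * a ∧
      ((d : ℝ) * a) / (b * c) = (n : ℝ) ^ 2 / (2 + n * (n - 1)) := by
  have hX : (0 : ℝ) < (q : ℝ) ^ n := by positivity
  have hq' : (2 : ℝ) ≤ q := by exact_mod_cast hq
  have hn' : (3 : ℝ) ≤ n := by exact_mod_cast hn
  have ha' : (a : ℝ) * q = n * q ^ n := by exact_mod_cast ha
  have hb' : (b : ℝ) = q ^ n := by exact_mod_cast hb
  have hc' : (c : ℝ) * q ^ 2 + q ^ n * q =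
      q ^ n * q ^ 2 + (n * n - n) * (q ^ n * (q * (q - 1) / 2)) := by
    rw [← Nat.cast_choose_two]
    have := congrArg (Nat.cast (R := ℝ)) hc
    push_cast [Nat.cast_sub (Nat.le_mul_self n)] at this
    exact this
  have hd' : (d : ℝ) * q = n * q ^ n * (q * (q - 1) / 2) := by
    rw [← Nat.cast_choose_two]
    exact_mod_cast hd
  generalize (q : ℝ) ^ n = X at *
  have hq0 : (q : ℝ) ≠ 0 := by positivity
  have h2c : 2 * (c : ℝ) * q = X * (q - 1) * (2 + n * (n - 1)) := by
    apply mul_right_cancel₀ hq0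
    linear_combination 2 * hc'
  have h2d : 2 * (d : ℝ) = n * X * (q - 1) := by
    apply mul_right_cancel₀ hq0
    linear_combination 2 * hd'
  have hden : (0 : ℝ) < 2 + n * (n - 1) := by nlinarith
  have hX' : 0 < X * ((q : ℝ) - 1) := mul_pos hX (by linarith)
  have hc0 : (0 : ℝ) < c := by
    have : 0 < 2 * (c : ℝ) * q := h2c ▸ mul_pos hX' hden
    nlinarith
  constructor
  · have hlt : (b : ℝ) * c < d * a := by
      have h : 2 * (q : ℝ) * (d * a - b * c) = X * (X * (q - 1)) * (n - 2) := by
        linear_combination (a * q : ℝ) * h2d + n * X * (q - 1) * ha' - b * h2c -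
          X * (q - 1) * (2 + n * (n - 1)) * hb'
      have : 0 < 2 * (q : ℝ) * (d * a - b * c) :=
        h ▸ mul_pos (mul_pos hX hX') (by linarith)
      have := pos_of_mul_pos_right this (by positivity)
      linarith
    have : b * c < d * a := by exact_mod_cast hlt
    nlinarith
  · have hb0 : (0 : ℝ) < b := hb' ▸ hX
    rw [div_eq_div_iff (by positivity) hden.ne']
    apply mul_right_cancel₀ (mul_ne_zero two_ne_zero hq0)
    linear_combination (2 + n * ((n : ℝ) - 1)) * (a * q * h2d + n * X * (q - 1) * ha') -
      n ^ 2 * (b * h2c + X * (q - 1) * (2 + n * (n - 1)) * hb')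

/-- For a prime `p` and `r ≥ 4`, in the matroid `M_{r,p}` the pair consisting of the
label `i` of `e₁` and the label `j` of `v` is positively correlated,
i.e. `b·b_{ij} > b_i·b_j`, and `α(M_{r,p}; i, j) = (r−1)²/(2 + (r−1)·(r−2))`. -/
theorem stmt14 (p r : ℕ) [Fact p.Prime] (hr : 4 ≤ r) :
    Nat.card {s : Finset (MrpIndex r p) //
          s.card = r ∧ FormsBasis (ZMod p) (mrpVec r p) s} *
        Nat.card {s : Finset (MrpIndex r p) //
          s.card = r ∧ FormsBasis (ZMod p) (mrpVec r p) s ∧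
            mrpI r p ∈ s ∧ mrpJ r p ∈ s} >
      Nat.card {s : Finset (MrpIndex r p) //
          s.card = r ∧ FormsBasis (ZMod p) (mrpVec r p) s ∧ mrpI r p ∈ s} *
        Nat.card {s : Finset (MrpIndex r p) //
          s.card = r ∧ FormsBasis (ZMod p) (mrpVec r p) s ∧ mrpJ r p ∈ s} ∧
    ((Nat.card {s : Finset (MrpIndex r p) //
          s.card = r ∧ FormsBasis (ZMod p) (mrpVec r p) s ∧
            mrpI r p ∉ s ∧ mrpJ r p ∉ s} : ℝ) *
        (Nat.card {s : Finset (MrpIndex r p) //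
          s.card = r ∧ FormsBasis (ZMod p) (mrpVec r p) s ∧
            mrpI r p ∈ s ∧ mrpJ r p ∈ s} : ℝ)) /
      ((Nat.card {s : Finset (MrpIndex r p) //
          s.card = r ∧ FormsBasis (ZMod p) (mrpVec r p) s ∧
            mrpI r p ∈ s ∧ mrpJ r p ∉ s} : ℝ) *
        (Nat.card {s : Finset (MrpIndex r p) //
          s.card = r ∧ FormsBasis (ZMod p) (mrpVec r p) s ∧
            mrpI r p ∉ s ∧ mrpJ r p ∈ s} : ℝ)) =
      ((r : ℝ) - 1) ^ 2 / (2 + ((r : ℝ) - 1) * ((r : ℝ) - 2)) := by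
  have : NeZero r := ⟨by omega⟩
  have hn := card_ne_zero_index (r := r)
  have : Nonempty {l : Fin r // l.val ≠ 0} := Fintype.card_pos_iff.1 (by omega)
  have hq : 2 ≤ p := (Fact.out : p.Prime).two_le
  have hA := card_separating_true_true (L := {l : Fin r // l.val ≠ 0}) (K := ZMod p)
  have hB := card_separating_true_false (L := {l : Fin r // l.val ≠ 0}) (K := ZMod p)
  have hC := card_separating_false_true (L := {l : Fin r // l.val ≠ 0}) (K := ZMod p)
  have hD := card_separating_false_false (L := {l : Fin r // l.val ≠ 0}) (K := ZMod p)
  have eA := card_bases_eq_card_separating (r := r) (p := p) True True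
  have eB := card_bases_eq_card_separating (r := r) (p := p) True False
  have eC := card_bases_eq_card_separating (r := r) (p := p) False True
  have eD := card_bases_eq_card_separating (r := r) (p := p) False False
  rw [ZMod.card] at hA hB hC hD
  generalize hN : Fintype.card {l : Fin r // l.val ≠ 0} = n at *
  simp only [iff_true, iff_false, if_true, if_false, zero_add, ← hn, add_comm 1 (_ + _),
    add_comm 1 (∑ _, _), add_left_inj] at eA eB eC eD
  rw [← eA, hn] at hA
  rw [← eB, hn] at hB
  rw [← eC, hn] at hC
  rw [← eD, hn] at hD
  obtain ⟨hlt, hratio⟩ := correlation_of_counts (by omega) hq hA hB hC hD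
  have hr1 : (r : ℝ) - 1 = n := by rw [← hn]; push_cast; ring
  have hr2 : (r : ℝ) - 2 = n - 1 := by rw [← hn]; push_cast; ring
  refine ⟨?_, by rw [hratio, hr1, hr2]⟩
  have sI := natCard_subtype_eq_add (fun s : Finset (MrpIndex r p) =>
    #s = r ∧ FormsBasis (ZMod p) (mrpVec r p) s ∧ mrpI r p ∈ s) (mrpJ r p ∈ ·)
  have sI' := natCard_subtype_eq_add (fun s : Finset (MrpIndex r p) =>
    #s = r ∧ FormsBasis (ZMod p) (mrpVec r p) s ∧ mrpI r p ∉ s) (mrpJ r p ∈ ·)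
  have sJ := natCard_subtype_eq_add (fun s : Finset (MrpIndex r p) =>
    #s = r ∧ FormsBasis (ZMod p) (mrpVec r p) s ∧ mrpJ r p ∈ s) (mrpI r p ∈ ·)
  have sB := natCard_subtype_eq_add (fun s : Finset (MrpIndex r p) =>
    #s = r ∧ FormsBasis (ZMod p) (mrpVec r p) s) (mrpI r p ∈ ·)
  simp only [and_assoc] at sI sI' sJ sB
  simp only [and_comm (a := mrpJ r p ∈ _)] at sJ
  rw [sB, sI, sI', sJ]
  exact hlt
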